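/- Let μ ∈ ℝ^p, Σ symmetric positive definite, ν > 0, and 0 < q < 1. The MLq score function for the degrees of freedom, Ψ_ν^q(x) = [(1/2) ψ((ν+p)/2) − (1/2) ψ(ν/2) + (1/2) log ν + 1/2 − (1/2) log(ν + s(x)) − (1/2)(ν+p)/(ν+s(x))] · f(x; μ, Σ, ν)^{1−q}, where s(x) = (x−μ)ᵀ Σ^{-1}(x−μ), is a bounded function of x on ℝ^p, and moreover Ψ_ν^q(x) → 0 as ‖x‖ → ∞. -/

import Mathlib

open Matrix Filter Topology

/-- The multivariate t density on ℝ^p with location `μ`, scatter matrix `S` and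
degrees of freedom `ν`. -/
noncomputable def mvtPdf (p : ℕ) (μ : Fin p → ℝ) (S : Matrix (Fin p) (Fin p) ℝ)
    (ν : ℝ) (x : Fin p → ℝ) : ℝ :=
  Real.Gamma ((ν + p) / 2) * S.det ^ (-(1 : ℝ) / 2) /
      ((Real.pi * ν) ^ ((p : ℝ) / 2) * Real.Gamma (ν / 2)) *
    (1 + (x - μ) ⬝ᵥ (S⁻¹ *ᵥ (x - μ)) / ν) ^ (-((ν + p) / 2))

/-- The digamma function `ψ(α) = d/dα log Γ(α)`. -/
noncomputable def digamma (x : ℝ) : ℝ :=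
  deriv (fun t => Real.log (Real.Gamma t)) x

/-- The MLq score function for the degrees of freedom of the multivariate t
distribution, i.e. the ML score weighted by `f(x)^{1-q}`. -/
noncomputable def mlqDofScore (p : ℕ) (μ : Fin p → ℝ) (S : Matrix (Fin p) (Fin p) ℝ)
    (ν q : ℝ) (x : Fin p → ℝ) : ℝ :=
  (1 / 2 * digamma ((ν + p) / 2) - 1 / 2 * digamma (ν / 2) + 1 / 2 * Real.log ν +
      1 / 2 - 1 / 2 * Real.log (ν + (x - μ) ⬝ᵥ (S⁻¹ *ᵥ (x - μ))) -
      1 / 2 * (ν + p) / (ν + (x - μ) ⬝ᵥ (S⁻¹ *ᵥ (x - μ)))) *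
    mvtPdf p μ S ν x ^ (1 - q)

/-!
Put `t = 1 + s(x) / ν`. Since `ν + s(x) = ν t`, the terms `log ν` cancel and the score is a constant
multiple of `(A - (1/2) log t - C / t) t ^ (-b)` with `b = (1 - q) (ν + p) / 2 > 0`. The power of
`t` beats the logarithm as `t → ∞`, and `t → ∞` as `‖x‖ → ∞` because `Σ⁻¹` is positive definite.
A continuous function with a limit at infinity is bounded.
-/

section Coercivity

variable {E : Type*} [NormedAddCommGroup E] [NormedSpace ℝ E] [ProperSpace E] {Q : E → ℝ} {k : ℕ}

theorem exists_pos_mul_norm_pow_le_of_homogeneous (hQ : Continuous Q) (hk : k ≠ 0)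
    (hsmul : ∀ c : ℝ, 0 ≤ c → ∀ x, Q (c • x) = c ^ k * Q x) (hpos : ∀ x, x ≠ 0 → 0 < Q x) :
    ∃ c : ℝ, 0 < c ∧ ∀ x, c * ‖x‖ ^ k ≤ Q x := by
  have hQ0 : Q 0 = 0 := by simpa [hk] using hsmul 0 le_rfl 0
  rcases subsingleton_or_nontrivial E with hE | hE
  · exact ⟨1, one_pos, fun x => by simp [Subsingleton.elim x 0, hQ0, hk]⟩
  obtain ⟨y, hy, hmin⟩ := (isCompact_sphere (0 : E) 1).exists_isMinOn
    (NormedSpace.sphere_nonempty.2 zero_le_one) hQ.continuousOn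
  refine ⟨Q y, hpos y (ne_zero_of_mem_unit_sphere ⟨y, hy⟩), fun x => ?_⟩
  rcases eq_or_ne x 0 with rfl | hx
  · simp [hQ0, hk]
  have hx_norm : ‖x‖ ≠ 0 := norm_ne_zero_iff.2 hx
  have hle : Q y ≤ Q (‖x‖⁻¹ • x) := hmin (by simp [norm_smul, hx_norm])
  calc Q y * ‖x‖ ^ k ≤ Q (‖x‖⁻¹ • x) * ‖x‖ ^ k := by gcongr
    _ = Q x := by rw [hsmul _ (by positivity), inv_pow]; field_simp

theorem tendsto_cocompact_atTop_of_homogeneous (hQ : Continuous Q) (hk : k ≠ 0)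
    (hsmul : ∀ c : ℝ, 0 ≤ c → ∀ x, Q (c • x) = c ^ k * Q x) (hpos : ∀ x, x ≠ 0 → 0 < Q x) :
    Tendsto Q (cocompact E) atTop := by
  obtain ⟨c, hc, hbound⟩ := exists_pos_mul_norm_pow_le_of_homogeneous hQ hk hsmul hpos
  exact tendsto_atTop_mono hbound <|
    ((tendsto_pow_atTop hk).comp tendsto_norm_cocompact_atTop).const_mul_atTop hc

end Coercivity

theorem isBounded_range_of_continuous_of_tendsto_cocompact {X Y : Type*} [TopologicalSpace X]
    [PseudoMetricSpace Y] {f : X → Y} {y : Y} (hf : Continuous f)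
    (hlim : Tendsto f (cocompact X) (𝓝 y)) : Bornology.IsBounded (Set.range f) := by
  obtain ⟨K, hK, hKball⟩ := mem_cocompact.1 (hlim (Metric.ball_mem_nhds y one_pos))
  refine ((hK.image hf).isBounded.union (Metric.isBounded_ball (x := y) (r := 1))).subset ?_
  rintro _ ⟨x, rfl⟩
  by_cases hx : x ∈ K
  · exact Or.inl ⟨x, hx, rfl⟩
  · exact Or.inr (hKball hx)

theorem tendsto_sub_log_sub_div_mul_rpow_neg_atTop (A B C : ℝ) {b : ℝ} (hb : 0 < b) :
    Tendsto (fun t : ℝ => (A - B * Real.log t - C / t) * t ^ (-b)) atTop (𝓝 0) := by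
  have hpow : Tendsto (fun t : ℝ => t ^ (-b)) atTop (𝓝 0) := tendsto_rpow_neg_atTop hb
  have hlog : Tendsto (fun t : ℝ => Real.log t * t ^ (-b)) atTop (𝓝 0) := by
    refine (isLittleO_log_rpow_atTop hb).tendsto_div_nhds_zero.congr' ?_
    filter_upwards [eventually_ge_atTop 0] with t ht
    rw [Real.rpow_neg ht, div_eq_mul_inv]
  have hinv : Tendsto (fun t : ℝ => C / t) atTop (𝓝 0) := tendsto_const_nhds.div_atTop tendsto_id
  have hsum := ((hpow.const_mul A).sub (hlog.const_mul B)).sub (hinv.mul hpow)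
  simp only [mul_zero, sub_zero] at hsum
  exact hsum.congr fun t => by ring

section Mahalanobis

variable {n : Type*} [Fintype n]

theorem tendsto_dotProduct_mulVec_cocompact_atTop {A : Matrix n n ℝ} (hA : A.PosDef) :
    Tendsto (fun y : n → ℝ => y ⬝ᵥ (A *ᵥ y)) (cocompact (n → ℝ)) atTop := by
  refine tendsto_cocompact_atTop_of_homogeneous (by fun_prop) two_ne_zero (fun c _ y => ?_)
    fun y hy => by simpa only [star_trivial] using hA.dotProduct_mulVec_pos hy
  simp only [mulVec_smul, smul_dotProduct, dotProduct_smul, smul_eq_mul]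
  ring

variable [DecidableEq n]

/-- The squared Mahalanobis distance `s(x) = (x - μ)ᵀ S⁻¹ (x - μ)` through which the multivariate
t density depends on `x`. -/
noncomputable def mahalanobisSq (μ : n → ℝ) (S : Matrix n n ℝ) (x : n → ℝ) : ℝ :=
  (x - μ) ⬝ᵥ (S⁻¹ *ᵥ (x - μ))

variable (μ : n → ℝ) (S : Matrix n n ℝ)

theorem continuous_mahalanobisSq : Continuous (mahalanobisSq μ S) := by
  unfold mahalanobisSq
  fun_prop

variable {S}

theorem mahalanobisSq_nonneg (hS : S.PosSemidef) (x : n → ℝ) : 0 ≤ mahalanobisSq μ S x := by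
  simpa only [mahalanobisSq, star_trivial] using hS.inv.dotProduct_mulVec_nonneg (x - μ)

theorem one_add_mahalanobisSq_div_pos (hS : S.PosSemidef) {ν : ℝ} (hν : 0 < ν) (x : n → ℝ) :
    0 < 1 + mahalanobisSq μ S x / ν :=
  add_pos_of_pos_of_nonneg one_pos (div_nonneg (mahalanobisSq_nonneg μ hS x) hν.le)

theorem tendsto_mahalanobisSq_cocompact_atTop (hS : S.PosDef) :
    Tendsto (mahalanobisSq μ S) (cocompact (n → ℝ)) atTop :=
  (tendsto_dotProduct_mulVec_cocompact_atTop hS.inv).comp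
    (Homeomorph.subRight μ).isClosedEmbedding.tendsto_cocompact

end Mahalanobis

section Profile

/-- The MLq score for the degrees of freedom as a function of `t = 1 + s(x) / ν`, up to the constant
factor `f(μ) ^ (1 - q)`. -/
noncomputable def mlqDofProfile (p : ℕ) (ν q t : ℝ) : ℝ :=
  (1 / 2 * digamma ((ν + p) / 2) - 1 / 2 * digamma (ν / 2) + 1 / 2 - 1 / 2 * Real.log t -
    (ν + p) / (2 * ν) / t) * t ^ (-((ν + p) / 2 * (1 - q)))

variable (p : ℕ) (ν q : ℝ)

theorem continuousOn_mlqDofProfile : ContinuousOn (mlqDofProfile p ν q) (Set.Ioi 0) := by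
  intro t ht
  have ht_ne : t ≠ 0 := ne_of_gt ht
  unfold mlqDofProfile
  fun_prop (disch := simp [ht_ne])

variable {ν q}

theorem tendsto_mlqDofProfile_atTop (hν : 0 < ν) (hq : q < 1) :
    Tendsto (mlqDofProfile p ν q) atTop (𝓝 0) :=
  tendsto_sub_log_sub_div_mul_rpow_neg_atTop _ _ _ (mul_pos (by positivity) (sub_pos.2 hq))

end Profile

section Score

variable {p : ℕ} (μ : Fin p → ℝ) (S : Matrix (Fin p) (Fin p) ℝ) (ν : ℝ)

theorem mvtPdf_eq_mvtPdf_self_mul (x : Fin p → ℝ) :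
    mvtPdf p μ S ν x =
      mvtPdf p μ S ν μ * (1 + mahalanobisSq μ S x / ν) ^ (-((ν + p) / 2)) := by
  simp [mvtPdf, mahalanobisSq]

variable {S ν}

theorem mvtPdf_self_nonneg (hS : 0 ≤ S.det) (hν : 0 < ν) : 0 ≤ mvtPdf p μ S ν μ := by
  have hΓ : 0 < Real.Gamma (ν / 2) := Real.Gamma_pos_of_pos (by positivity)
  have hΓp : 0 < Real.Gamma ((ν + p) / 2) := Real.Gamma_pos_of_pos (by positivity)
  simp only [mvtPdf, sub_self, zero_dotProduct, zero_div, add_zero, Real.one_rpow, mul_one]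
  exact div_nonneg (mul_nonneg hΓp.le (Real.rpow_nonneg hS _))
    (mul_nonneg (Real.rpow_nonneg (by positivity) _) hΓ.le)

theorem mlqDofScore_eq_mul_mlqDofProfile (hS : S.PosSemidef) (hν : 0 < ν) (q : ℝ)
    (x : Fin p → ℝ) :
    mlqDofScore p μ S ν q x =
      mvtPdf p μ S ν μ ^ (1 - q) * mlqDofProfile p ν q (1 + mahalanobisSq μ S x / ν) := by
  have ht := one_add_mahalanobisSq_div_pos μ hS hν x
  have hadd : ν + mahalanobisSq μ S x = ν * (1 + mahalanobisSq μ S x / ν) := by field_simp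
  have hweight : mvtPdf p μ S ν x ^ (1 - q) = mvtPdf p μ S ν μ ^ (1 - q) *
      (1 + mahalanobisSq μ S x / ν) ^ (-((ν + p) / 2 * (1 - q))) := by
    rw [mvtPdf_eq_mvtPdf_self_mul, Real.mul_rpow (mvtPdf_self_nonneg μ hS.det_nonneg hν)
      (Real.rpow_nonneg ht.le _), ← Real.rpow_mul ht.le, neg_mul]
  rw [mlqDofScore, hweight, ← mahalanobisSq, hadd, Real.log_mul hν.ne' ht.ne', mlqDofProfile]
  field_simp
  ring

theorem continuous_mlqDofScore (hS : S.PosSemidef) (hν : 0 < ν) (q : ℝ) :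
    Continuous (mlqDofScore p μ S ν q) := by
  rw [funext (mlqDofScore_eq_mul_mlqDofProfile μ hS hν q)]
  exact continuous_const.mul <| (continuousOn_mlqDofProfile p ν q).comp_continuous
    (continuous_const.add ((continuous_mahalanobisSq μ S).div_const ν))
    (one_add_mahalanobisSq_div_pos μ hS hν)

theorem tendsto_mlqDofScore_cocompact (hS : S.PosDef) (hν : 0 < ν) {q : ℝ} (hq : q < 1) :
    Tendsto (mlqDofScore p μ S ν q) (cocompact (Fin p → ℝ)) (𝓝 0) := by
  rw [funext (mlqDofScore_eq_mul_mlqDofProfile μ hS.posSemidef hν q)]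
  have ht : Tendsto (fun x => 1 + mahalanobisSq μ S x / ν) (cocompact (Fin p → ℝ)) atTop :=
    tendsto_atTop_add_const_left _ 1
      ((tendsto_mahalanobisSq_cocompact_atTop μ hS).atTop_div_const hν)
  simpa only [mul_zero, Function.comp_apply] using
    ((tendsto_mlqDofProfile_atTop p hν hq).comp ht).const_mul (mvtPdf p μ S ν μ ^ (1 - q))

end Score

theorem mlq_dof_score_bounded_general (p : ℕ) (μ : Fin p → ℝ) (S : Matrix (Fin p) (Fin p) ℝ)
    (hSpos : S.PosDef) (ν : ℝ) (hν : 0 < ν) (q : ℝ) (hq1 : q < 1) :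
    (∃ M : ℝ, ∀ x : Fin p → ℝ, |mlqDofScore p μ S ν q x| ≤ M) ∧
      Tendsto (fun x : Fin p → ℝ => mlqDofScore p μ S ν q x)
        (comap (fun x : Fin p → ℝ => ‖x‖) atTop) (𝓝 0) := by
  have hzero := tendsto_mlqDofScore_cocompact μ hSpos hν hq1
  obtain ⟨M, hM⟩ := (isBounded_range_of_continuous_of_tendsto_cocompact
    (continuous_mlqDofScore μ hSpos.posSemidef hν q) hzero).exists_norm_le
  refine ⟨⟨M, fun x => hM _ ⟨x, rfl⟩⟩, ?_⟩
  rwa [comap_norm_atTop, Metric.cobounded_eq_cocompact]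

/-- The MLq score function for the degrees of freedom is bounded on ℝ^p, and it
tends to `0` as `‖x‖ → ∞`. -/
theorem mlq_dof_score_bounded (p : ℕ) (hp : 0 < p) (μ : Fin p → ℝ)
    (S : Matrix (Fin p) (Fin p) ℝ) (hSsymm : S.IsSymm) (hSpos : S.PosDef)
    (ν : ℝ) (hν : 0 < ν) (q : ℝ) (hq0 : 0 < q) (hq1 : q < 1) :
    (∃ M : ℝ, ∀ x : Fin p → ℝ, |mlqDofScore p μ S ν q x| ≤ M) ∧
      Tendsto (fun x : Fin p → ℝ => mlqDofScore p μ S ν q x)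
        (comap (fun x : Fin p → ℝ => ‖x‖) atTop) (𝓝 0) :=
  mlq_dof_score_bounded_general p μ S hSpos ν hν q hq1
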